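/- arXiv:2009.00925 — 5 statements merged into one kernel-verified Lean document; each statement's English description precedes it below -/
import Mathlib

section
/- Let f : 𝕊 → 𝕊 be a circle map with h_top(f) = 0, deg(f) = 1 and a fixed point, and let F be a lifting of f and I = [a,b] ⊂ ℝ a closed interval with 1 ≤ b − a < 2 such that F([a,b]) = [a,b], F([a,b−1]) ⊆ [a,b−1] and F([a+1,b]) ⊆ [a+1,b]. Then for every x ∈ [a,b], the ω-limit set ω(x,F) satisfies: ω(x,F) ⊆ [a,b−1], or ω(x,F) ⊆ (b−1,a+1), or ω(x,F) ⊆ [a+1,b]. -/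
/-!
An orbit that enters one of the invariant intervals `[a, b - 1]`, `[a + 1, b]` stays there, so the
only interesting orbits remain in `(b - 1, a + 1)` forever. If the ω-limit set of such an orbit
contains the endpoint `p = b - 1`, then `p` is a fixed point of `F`, and the claim becomes: with
zero entropy, the ω-limit set is `{p}`. The other endpoint is the mirror image
(`exists_horseshoe'`).

Suppose the orbit accumulates both at `p` and at some `c > p`; a horseshoe is then constructed
(`exists_horseshoe`).
* If some point `t ≠ p` of the ω-limit set is mapped to `p`, the orbit, which runs from near `p` to
  beyond `t` (or beyond a preimage of `t` in the ω-limit set, if `t` is the maximum of that set),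
  gives a homoclinic horseshoe (`isHorseshoe_of_preimage`).
* Otherwise, by compactness, the orbit can approach `p` only through points already close to `p`.
  It must move both up and down there, so `p` is a limit of fixed points. Three of them,
  `z₂ < z₁ < z₀`, can be chosen so close to `p` that the descending orbit cannot jump over
  `[z₁, z₀]`; an orbit piece from `[z₁, z₀]` to below `z₂` and then to above `z₀` gives a horseshoe
  (`isHorseshoe_of_fixed`).

The horseshoe lies in a half-open interval of length at most one, so it projects injectively to the
circle, and a horseshoe for `f^k` forces entropy at least `log 2 / k`
(`IsHorseshoe.topEnt_ne_zero`), contradicting `h_top(f) = 0`.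
-/

open Set Filter Topology ENNReal

noncomputable section

/-- The circle `𝕊 = ℝ / ℤ`, identified with `{z ∈ ℂ : |z| = 1}` via `x ↦ exp(2πix)`. -/
abbrev Circle1 : Type := AddCircle (1 : ℝ)

/-- The natural projection `e : ℝ → 𝕊`, `e(x) = exp(2πix)`. -/
def projS : ℝ → Circle1 := fun x => (x : Circle1)

/-- `𝒰` is an open cover of `X`. -/
def IsOpenCover {X : Type*} [TopologicalSpace X] (U : Set (Set X)) : Prop :=
  (∀ A ∈ U, IsOpen A) ∧ ⋃₀ U = univ

/-- `N(𝒰)`: the minimal cardinality of a subcover of `𝒰`. -/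
def coverN {X : Type*} (U : Set (Set X)) : ℕ :=
  sInf {n | ∃ V : Finset (Set X), ↑V ⊆ U ∧ ⋃₀ (V : Set (Set X)) = univ ∧ V.card = n}

/-- The join `⋁_{i} f^{-t i} 𝒰` of preimages of a cover along a finite sequence of times. -/
def timeJoin {X : Type*} (f : X → X) (U : Set (Set X)) {n : ℕ} (t : Fin n → ℕ) :
    Set (Set X) :=
  {A | ∃ u : Fin n → Set X, (∀ i, u i ∈ U) ∧ A = ⋂ i, f^[t i] ⁻¹' u i}

/-- Topological entropy of `f` with respect to the cover `𝒰`: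
`lim (1/n) log N(⋁_{i=1}^n f^{-i} 𝒰)`. -/
def coverEnt {X : Type*} (f : X → X) (U : Set (Set X)) : ℝ≥0∞ :=
  Filter.limsup
    (fun n : ℕ =>
      ENNReal.ofReal (Real.log (coverN (timeJoin f U (fun i : Fin n => (i : ℕ) + 1))) / n))
    Filter.atTop

/-- Topological entropy `h_top(f)`. -/
def topEnt {X : Type*} [TopologicalSpace X] (f : X → X) : ℝ≥0∞ :=
  ⨆ U ∈ {U : Set (Set X) | IsOpenCover U}, coverEnt f U

/-- Topological sequence entropy of `f` along the sequence `a` with respect to the cover `𝒰`. -/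
def seqEnt {X : Type*} (f : X → X) (a : ℕ → ℕ) (U : Set (Set X)) : ℝ≥0∞ :=
  Filter.limsup
    (fun n : ℕ =>
      ENNReal.ofReal (Real.log (coverN (timeJoin f U (fun i : Fin n => a (i : ℕ)))) / n))
    Filter.atTop

/-- `(X,f)` is topological null: the sequence entropy along every increasing sequence of
positive integers vanishes. -/
def IsNull {X : Type*} [TopologicalSpace X] (f : X → X) : Prop :=
  ∀ a : ℕ → ℕ, StrictMono a → (∀ n, 0 < a n) →
    ∀ U : Set (Set X), IsOpenCover U → seqEnt f a U = 0

/-- The maximal pattern complexity `p*_{X,𝒰}(n)`. -/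
def patternComp {X : Type*} (f : X → X) (U : Set (Set X)) (n : ℕ) : ℕ :=
  sSup {m | ∃ t : Fin n → ℕ, m = coverN (timeJoin f U t)}

/-- A function `q : ℕ → ℕ` is of polynomial order: `q(n) ≤ C n^C` for some constant `C > 0`. -/
def PolyOrder (q : ℕ → ℕ) : Prop :=
  ∃ C : ℝ, 0 < C ∧ ∀ n : ℕ, 1 ≤ n → (q n : ℝ) ≤ C * (n : ℝ) ^ C

/-- The ω-limit set `ω(x,f) = ⋂_n closure {f^i(x) : i ≥ n}`. -/
def omegaSet {X : Type*} [TopologicalSpace X] (f : X → X) (x : X) : Set X :=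
  ⋂ n : ℕ, closure {y | ∃ i, n ≤ i ∧ f^[i] x = y}

/-- `I` is an independence set for the pair of sets `{U, V}`. -/
def IsIndepSet {X : Type*} (f : X → X) (U V : Set X) (I : Set ℕ) : Prop :=
  ∀ J : Finset ℕ, ↑J ⊆ I → J.Nonempty →
    ∀ S : ℕ → Bool, (⋂ i ∈ J, f^[i] ⁻¹' (if S i then U else V)).Nonempty

/-- `⟨x,y⟩` is an IN-pair: every pair of neighborhoods has arbitrarily large finite
independence sets. -/
def IsINPair {X : Type*} [TopologicalSpace X] (f : X → X) (x y : X) : Prop :=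
  ∀ U ∈ nhds x, ∀ V ∈ nhds y, ∀ m : ℕ, ∃ J : Finset ℕ, m ≤ J.card ∧ IsIndepSet f U V ↑J

/-- `⟨x,y⟩` is an IT-pair: every pair of neighborhoods has an infinite independence set. -/
def IsITPair {X : Type*} [TopologicalSpace X] (f : X → X) (x y : X) : Prop :=
  ∀ U ∈ nhds x, ∀ V ∈ nhds y, ∃ I : Set ℕ, I.Infinite ∧ IsIndepSet f U V I

/-- A closed nondegenerate proper subinterval (arc) of the circle. -/
def IsClosedArc (J : Set Circle1) : Prop :=
  ∃ c d : ℝ, c < d ∧ d - c < 1 ∧ J = projS '' Icc c d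

/-- A closed nondegenerate subinterval of a linearly ordered space. -/
def IsClosedSubInt {X : Type*} [Preorder X] (J : Set X) : Prop :=
  ∃ c d : X, c < d ∧ J = Icc c d

/-- `J, f(J), …, f^{n-1}(J)` are pairwise disjoint and `f^n(J) = J`. -/
def IsPeriodicSet {X : Type*} (f : X → X) (J : Set X) (n : ℕ) : Prop :=
  0 < n ∧ (∀ i j, i < j → j < n → Disjoint (f^[i] '' J) (f^[j] '' J)) ∧ f^[n] '' J = J

/-- `⟨x,y⟩` is a separable pair: `x` and `y` lie in two disjoint periodic intervals
(`isInt` is the notion of closed nondegenerate subinterval of the phase space). -/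
def SeparablePair {X : Type*} (isInt : Set X → Prop) (f : X → X) (x y : X) : Prop :=
  ∃ J₁ J₂ : Set X, ∃ n₁ n₂ : ℕ,
    isInt J₁ ∧ IsPeriodicSet f J₁ n₁ ∧ isInt J₂ ∧ IsPeriodicSet f J₂ n₂ ∧
    Disjoint J₁ J₂ ∧ x ∈ J₁ ∧ y ∈ J₂

/-- `⟨x,y⟩` is a non-separable pair. -/
def NonSeparablePair {X : Type*} [TopologicalSpace X] (isInt : Set X → Prop)
    (f : X → X) (x y : X) : Prop :=
  x ≠ y ∧ (∃ z, x ∈ omegaSet f z ∧ y ∈ omegaSet f z) ∧ ¬ SeparablePair isInt f x y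

/-- `F` is a lifting of the circle map `f`. -/
def IsLift (f : Circle1 → Circle1) (F : ℝ → ℝ) : Prop :=
  Continuous F ∧ ∀ x : ℝ, projS (F x) = f (projS x)

/-- `Per(f) ≠ ∅`. -/
def HasPeriodicPt {X : Type*} (f : X → X) : Prop :=
  ∃ y, ∃ q : ℕ, 0 < q ∧ f^[q] y = y

/-- `E` is an `(A,n,ε)`-spanning set. -/
def IsSpanningSet {X : Type*} [PseudoMetricSpace X] (f : X → X) (a : ℕ → ℕ) (n : ℕ)
    (ε : ℝ) (E : Set X) : Prop :=
  ∀ x : X, ∃ y ∈ E, ∀ i : Fin n, dist (f^[a (i : ℕ)] x) (f^[a (i : ℕ)] y) < ε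

/-- `r_A(n,ε)`: minimal cardinality of an `(A,n,ε)`-spanning set. -/
def spanNum {X : Type*} [PseudoMetricSpace X] (f : X → X) (a : ℕ → ℕ) (n : ℕ) (ε : ℝ) : ℕ :=
  sInf {m | ∃ E : Finset X, IsSpanningSet f a n ε ↑E ∧ E.card = m}

/-- `r*(n,ε) = sup_A r_A(n,ε)` over all increasing sequences `A`. -/
def rStar {X : Type*} [PseudoMetricSpace X] (f : X → X) (n : ℕ) (ε : ℝ) : ℕ :=
  sSup {m | ∃ a : ℕ → ℕ, StrictMono a ∧ m = spanNum f a n ε}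

/-- `E` is an `(A,n,ε)`-separated set. -/
def IsSeparatedSet {X : Type*} [PseudoMetricSpace X] (f : X → X) (a : ℕ → ℕ) (n : ℕ)
    (ε : ℝ) (E : Set X) : Prop :=
  ∀ x ∈ E, ∀ y ∈ E, x ≠ y → ∃ i : Fin n, ε ≤ dist (f^[a (i : ℕ)] x) (f^[a (i : ℕ)] y)

/-- `s_A(n,ε)`: maximal cardinality of an `(A,n,ε)`-separated set. -/
def sepNum {X : Type*} [PseudoMetricSpace X] (f : X → X) (a : ℕ → ℕ) (n : ℕ) (ε : ℝ) : ℕ :=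
  sSup {m | ∃ E : Finset X, IsSeparatedSet f a n ε ↑E ∧ E.card = m}

/-- `s*(n,ε) = sup_A s_A(n,ε)` over all increasing sequences `A`. -/
def sStar {X : Type*} [PseudoMetricSpace X] (f : X → X) (n : ℕ) (ε : ℝ) : ℕ :=
  sSup {m | ∃ a : ℕ → ℕ, StrictMono a ∧ m = sepNum f a n ε}


/-! ### Horseshoes and topological entropy -/

/-- `(K₀, K₁)` is a horseshoe for `g^k`: two disjoint nonempty compact sets, each of which is
mapped by `g^k` over both of them. (Nonemptiness of `K₁` follows from that of `K₀`.) -/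
def IsHorseshoe {X : Type*} [TopologicalSpace X] (g : X → X) (k : ℕ) (K₀ K₁ : Set X) : Prop :=
  IsCompact K₀ ∧ IsCompact K₁ ∧ K₀.Nonempty ∧ Disjoint K₀ K₁ ∧
    K₀ ∪ K₁ ⊆ g^[k] '' K₀ ∧ K₀ ∪ K₁ ⊆ g^[k] '' K₁

lemma IsHorseshoe.pos {X : Type*} [TopologicalSpace X] {g : X → X} {k : ℕ} {K₀ K₁ : Set X}
    (h : IsHorseshoe g k K₀ K₁) : 0 < k := by
  obtain ⟨-, -, ⟨x, hx⟩, hd, h0, h1⟩ := h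
  rcases Nat.eq_zero_or_pos k with rfl | hk
  · simp only [Function.iterate_zero, image_id] at h0 h1
    exact absurd (h1 (Or.inl hx)) (disjoint_left.1 hd hx)
  · exact hk

/-- Every finite itinerary through a horseshoe is realised by some point. -/
lemma IsHorseshoe.exists_itinerary {X : Type*} [TopologicalSpace X] {g : X → X} {k : ℕ}
    {K₀ K₁ : Set X} (h : IsHorseshoe g k K₀ K₁) (m : ℕ) :
    ∀ w : ℕ → Bool, ∃ x, ∀ i ≤ m, g^[k * i] x ∈ (if w i then K₁ else K₀) := by
  obtain ⟨-, -, hne, -, h0, h1⟩ := h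
  have hsub : ∀ b c : Bool, (if c then K₁ else K₀) ⊆ g^[k] '' (if b then K₁ else K₀) := by
    rintro (_ | _) (_ | _)
    · simpa using subset_union_left.trans h0
    · simpa using subset_union_right.trans h0
    · simpa using subset_union_left.trans h1
    · simpa using subset_union_right.trans h1
  induction m with
  | zero =>
    intro w
    obtain ⟨x, hx⟩ := hne
    obtain ⟨z, hz, -⟩ := hsub (w 0) false (by simpa using hx)
    refine ⟨z, fun i hi => ?_⟩
    obtain rfl : i = 0 := by omega
    simpa using hz
  | succ m ih =>
    intro w
    obtain ⟨x, hx⟩ := ih (fun i => w (i + 1))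
    obtain ⟨z, hz, hzx⟩ := hsub (w 0) (w 1) (by simpa using hx 0 (Nat.zero_le _))
    refine ⟨z, fun i hi => ?_⟩
    rcases i with _ | i
    · simpa using hz
    · rw [Nat.mul_succ, Function.iterate_add_apply, hzx]
      exact hx i (by omega)

/-- The join over times `1, …, k m` of the cover by the complements of `K₀` and `K₁` needs at
least `2 ^ m` members: no member contains two points with different itineraries. -/
lemma IsHorseshoe.two_pow_le_coverN {X : Type*} [TopologicalSpace X] {g : X → X} {k : ℕ}
    {K₀ K₁ : Set X} (h : IsHorseshoe g k K₀ K₁) (m : ℕ) :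
    2 ^ m ≤ coverN (timeJoin g {K₀ᶜ, K₁ᶜ} (fun i : Fin (k * m) => (i : ℕ) + 1)) := by
  have hk := h.pos
  have hd : Disjoint K₀ K₁ := h.2.2.2.1
  set U : Set (Set X) := {K₀ᶜ, K₁ᶜ} with hU
  set T := timeJoin g U (fun i : Fin (k * m) => (i : ℕ) + 1) with hT
  have hTfin : T.Finite := by
    have hpi : (Set.pi univ (fun _ : Fin (k * m) => U)).Finite :=
      Set.Finite.pi (fun _ => by simp [hU])
    refine (hpi.image (fun u => ⋂ i : Fin (k * m), g^[(i : ℕ) + 1] ⁻¹' u i)).subset ?_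
    rintro A ⟨u, hu, rfl⟩
    exact ⟨u, fun i _ => hu i, rfl⟩
  have hTcov : ⋃₀ T = univ := by
    refine eq_univ_of_forall fun x => ?_
    have hx : ∀ y : X, ∃ A ∈ U, y ∈ A := by
      intro y
      by_cases hy : y ∈ K₀
      · exact ⟨K₁ᶜ, by simp [hU], disjoint_left.1 hd hy⟩
      · exact ⟨K₀ᶜ, by simp [hU], hy⟩
    choose A hAU hA using hx
    exact ⟨_, ⟨fun i => A (g^[(i : ℕ) + 1] x), fun i => hAU _, rfl⟩,
      mem_iInter.2 fun i => hA _⟩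
  -- `coverN` is an infimum over a nonempty set of naturals, hence attained.
  have hmem : coverN T ∈ {n | ∃ V : Finset (Set X), ↑V ⊆ T ∧ ⋃₀ (V : Set (Set X)) = univ ∧
      V.card = n} :=
    Nat.sInf_mem ⟨_, hTfin.toFinset, by simp, by simpa using hTcov, rfl⟩
  obtain ⟨V, hVT, hVcov, hVcard⟩ := hmem
  rw [← hVcard]
  have hz : ∀ w : Fin m → Bool, ∃ x, ∀ i : Fin m,
      g^[k * ((i : ℕ) + 1)] x ∈ (if w i then K₁ else K₀) := by
    intro w
    obtain ⟨x, hx⟩ := h.exists_itinerary m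
      (fun i => if hi : i - 1 < m then w ⟨i - 1, hi⟩ else false)
    refine ⟨x, fun i => ?_⟩
    simpa using hx (i + 1) (by omega)
  choose z hz using hz
  have hA : ∀ w, ∃ A ∈ V, z w ∈ A := by
    intro w
    have : z w ∈ ⋃₀ (V : Set (Set X)) := hVcov ▸ mem_univ _
    simpa using this
  choose A hAV hzA using hA
  have hinj : Function.Injective A := by
    intro w w' hww
    funext j
    obtain ⟨u, hu, hAu⟩ := hVT (hAV w)
    have e1 := hzA w
    have e2 := hzA w'
    rw [← hww] at e2
    rw [hAu, mem_iInter] at e1 e2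
    have hlt : k * ((j : ℕ) + 1) - 1 < k * m := by
      have h1 : k * ((j : ℕ) + 1) ≤ k * m := Nat.mul_le_mul_left k j.2
      have h2 : 0 < k * ((j : ℕ) + 1) := by positivity
      omega
    have hidx : k * ((j : ℕ) + 1) - 1 + 1 = k * ((j : ℕ) + 1) := by
      have h2 : 0 < k * ((j : ℕ) + 1) := by positivity
      omega
    have e1 := e1 ⟨_, hlt⟩
    have e2 := e2 ⟨_, hlt⟩
    have hu := hu ⟨_, hlt⟩
    simp only [mem_preimage, hidx] at e1 e2
    have f1 := hz w j
    have f2 := hz w' j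
    rcases hu with hu | hu
    · rw [hu] at e1 e2
      cases hw : w j <;> cases hw' : w' j <;> simp_all
    · rw [hu] at e1 e2
      cases hw : w j <;> cases hw' : w' j <;> simp_all
  have hcard := Finset.card_le_card_of_injOn (s := Finset.univ) (t := V) A
    (fun w _ => hAV w) (hinj.injOn)
  simpa using hcard

lemma IsHorseshoe.topEnt_ne_zero {X : Type*} [TopologicalSpace X] [T2Space X] {g : X → X}
    {k : ℕ} {K₀ K₁ : Set X} (h : IsHorseshoe g k K₀ K₁) : topEnt g ≠ 0 := by
  have hk := h.pos
  have hcov : IsOpenCover ({K₀ᶜ, K₁ᶜ} : Set (Set X)) := by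
    refine ⟨?_, ?_⟩
    · rintro A (rfl | rfl)
      · exact h.1.isClosed.isOpen_compl
      · exact h.2.1.isClosed.isOpen_compl
    · rw [sUnion_pair, ← compl_inter, h.2.2.2.1.inter_eq, compl_empty]
  have hle : ENNReal.ofReal (Real.log 2 / k) ≤ coverEnt g {K₀ᶜ, K₁ᶜ} := by
    refine Filter.le_limsup_of_frequently_le ?_
    rw [Filter.frequently_atTop]
    intro N
    refine ⟨k * (N + 1), by nlinarith, ENNReal.ofReal_le_ofReal ?_⟩
    have h2 : ((2 : ℝ)) ^ (N + 1) ≤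
        coverN (timeJoin g {K₀ᶜ, K₁ᶜ} (fun i : Fin (k * (N + 1)) => (i : ℕ) + 1)) := by
      exact_mod_cast h.two_pow_le_coverN (N + 1)
    have h3 := Real.log_le_log (by positivity) h2
    rw [Real.log_pow] at h3
    have hk' : (0 : ℝ) < k := by exact_mod_cast hk
    rw [div_le_div_iff₀ hk' (by positivity)]
    push_cast at h3 ⊢
    nlinarith
  have hpos : (0 : ℝ≥0∞) < ENNReal.ofReal (Real.log 2 / k) := by
    have hk' : (0 : ℝ) < k := by exact_mod_cast hk
    exact ENNReal.ofReal_pos.2 (div_pos (Real.log_pos (by norm_num)) hk')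
  refine ((hpos.trans_le hle).trans_le ?_).ne'
  exact le_iSup₂_of_le (f := fun (U : Set (Set X))
    (_ : U ∈ {U : Set (Set X) | IsOpenCover U}) => coverEnt g U) _ hcov le_rfl

/-- A horseshoe of a lifting descends to the circle as long as it sits in a set on which the
projection is injective. -/
lemma IsHorseshoe.project {f : Circle1 → Circle1} {F : ℝ → ℝ} (hF : IsLift f F) {k : ℕ}
    {K₀ K₁ S : Set ℝ} (h : IsHorseshoe F k K₀ K₁) (hS : InjOn projS S) (h0 : K₀ ⊆ S)
    (h1 : K₁ ⊆ S) : IsHorseshoe f k (projS '' K₀) (projS '' K₁) := by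
  obtain ⟨c0, c1, hne, hd, hi0, hi1⟩ := h
  have hc : Continuous projS := AddCircle.continuous_mk' 1
  have hsemi : ∀ K : Set ℝ, f^[k] '' (projS '' K) = projS '' (F^[k] '' K) := by
    intro K
    have hs : Function.Semiconj projS F f := hF.2
    rw [image_image, image_image]
    exact image_congr fun x _ => ((hs.iterate_right k) x).symm
  refine ⟨c0.image hc, c1.image hc, hne.image _, ?_, ?_, ?_⟩
  · rw [disjoint_left]
    rintro _ ⟨x, hx, rfl⟩ ⟨y, hy, hxy⟩
    exact disjoint_left.1 hd hx (hS (h1 hy) (h0 hx) hxy ▸ hy)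
  · rw [hsemi, ← image_union]
    exact image_mono hi0
  · rw [hsemi, ← image_union]
    exact image_mono hi1

/-! ### ω-limit sets as sets of cluster points -/

lemma mem_omegaSet_iff {X : Type*} [TopologicalSpace X] {f : X → X} {x y : X} :
    y ∈ omegaSet f x ↔ MapClusterPt y atTop (fun n => f^[n] x) := by
  simp only [omegaSet, mem_iInter, mem_closure_iff_nhds, mapClusterPt_iff_frequently,
    frequently_atTop]
  constructor
  · intro h s hs n
    obtain ⟨_, hz, i, hi, rfl⟩ := h n s hs
    exact ⟨i, hi, hz⟩
  · intro h n s hs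
    obtain ⟨i, hi, hz⟩ := h s hs n
    exact ⟨_, hz, i, hi, rfl⟩

lemma map_mem_omegaSet {f : ℝ → ℝ} (hf : Continuous f) {x y : ℝ} (h : y ∈ omegaSet f x) :
    f y ∈ omegaSet f x := by
  rw [mem_omegaSet_iff, mapClusterPt_iff_frequently] at h ⊢
  intro s hs
  have h1 := h (f ⁻¹' s) (hf.continuousAt hs)
  rw [frequently_atTop] at h1 ⊢
  intro n
  obtain ⟨i, hi, h2⟩ := h1 n
  refine ⟨i + 1, by omega, ?_⟩
  rw [Function.iterate_succ_apply']
  exact h2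

lemma exists_lt_of_mem_omegaSet {f : ℝ → ℝ} {x y z : ℝ} (h : y ∈ omegaSet f x) (hz : z < y)
    (N : ℕ) : ∃ n ≥ N, z < f^[n] x := by
  rw [mem_omegaSet_iff, mapClusterPt_iff_frequently] at h
  exact frequently_atTop.1 (h (Ioi z) (Ioi_mem_nhds hz)) N

lemma exists_gt_of_mem_omegaSet {f : ℝ → ℝ} {x y z : ℝ} (h : y ∈ omegaSet f x) (hz : y < z)
    (N : ℕ) : ∃ n ≥ N, f^[n] x < z := by
  rw [mem_omegaSet_iff, mapClusterPt_iff_frequently] at h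
  exact frequently_atTop.1 (h (Iio z) (Iio_mem_nhds hz)) N

lemma omegaSet_subset_of_forall_ge {f : ℝ → ℝ} {x : ℝ} {S : Set ℝ} (hS : IsClosed S) (N : ℕ)
    (h : ∀ n ≥ N, f^[n] x ∈ S) : omegaSet f x ⊆ S := by
  intro y hy
  refine closure_minimal ?_ hS (mem_iInter.1 hy N)
  rintro _ ⟨i, hi, rfl⟩
  exact h i hi

/-- If the orbit of `x` visits a compact set `C` at times whose successors approach `τ`, then
`τ` has a preimage in `C` belonging to the ω-limit set. -/
lemma exists_preimage_omegaSet {f : ℝ → ℝ} (hf : Continuous f) {x τ : ℝ} {C : Set ℝ}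
    (hC : IsCompact C) (h : ∀ s ∈ 𝓝 τ, ∀ N, ∃ n ≥ N, f^[n] x ∈ C ∧ f^[n + 1] x ∈ s) :
    ∃ t ∈ C, t ∈ omegaSet f x ∧ f t = τ := by
  set y : ℕ → ℝ := fun n => f^[n] x with hy
  -- The filter of large times `n` with `y n ∈ C` and `y (n + 1)` close to `τ`.
  set L : Filter ℕ := (atTop ⊓ comap (fun n => f (y n)) (𝓝 τ)) ⊓ 𝓟 {n | y n ∈ C} with hL
  have hne : L.NeBot := by
    rw [hL, ← Filter.frequently_mem_iff_neBot]
    rw [((atTop_basis).inf ((𝓝 τ).basis_sets.comap _)).frequently_iff]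
    rintro ⟨N, s⟩ ⟨-, hs⟩
    obtain ⟨n, hn, h1, h2⟩ := h s hs N
    refine ⟨n, ⟨hn, ?_⟩, h1⟩
    rw [Function.iterate_succ_apply'] at h2
    exact h2
  obtain ⟨t, htC, ht⟩ := hC (f := map y L) (by
    rw [le_principal_iff, mem_map]
    exact mem_inf_of_right (mem_principal_self _))
  have ht' : MapClusterPt t L y := ht
  refine ⟨t, htC, ?_, ?_⟩
  · rw [mem_omegaSet_iff]
    exact ht'.mono (inf_le_left.trans inf_le_left)
  · have h1 : MapClusterPt (f t) L (f ∘ y) := ht'.continuousAt_comp hf.continuousAt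
    have h2 : Tendsto (f ∘ y) L (𝓝 τ) :=
      tendsto_comap.mono_left (inf_le_left.trans inf_le_right)
    exact eq_of_nhds_neBot (h1.neBot.mono (inf_le_inf_left _ h2))

/-! ### Horseshoes produced by a recurrent fixed point -/

/-- A homoclinic configuration: a point between the fixed point `p` and an eventual preimage `w`
of `p` is sent beyond `w`. -/
lemma isHorseshoe_of_preimage {g : ℝ → ℝ} (hg : Continuous g) {p w y : ℝ} {r : ℕ}
    (hp : g p = p) (hpy : p < y) (hyw : y < w) (hw : g^[r] w = p) (hy : w < g^[r] y) :
    ∃ k K₀ K₁, IsHorseshoe g k K₀ K₁ ∧ K₀ ⊆ Icc p w ∧ K₁ ⊆ Icc p w := by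
  have hc : Continuous g^[r] := hg.iterate r
  have hpr : g^[r] p = p := Function.iterate_fixed hp r
  obtain ⟨s, hs, hsw⟩ := intermediate_value_Icc hpy.le hc.continuousOn
    (show w ∈ Icc (g^[r] p) (g^[r] y) from ⟨by rw [hpr]; linarith, hy.le⟩)
  have hsy : s < y := lt_of_le_of_ne hs.2 (by rintro rfl; exact hy.ne hsw.symm)
  have h0 : Icc p w ⊆ g^[r] '' Icc p s := by
    have := intermediate_value_Icc hs.1 (hc.continuousOn (s := Icc p s))
    rwa [hpr, hsw] at this
  have h1 : Icc p w ⊆ g^[r] '' Icc y w := by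
    have := intermediate_value_Icc' hyw.le (hc.continuousOn (s := Icc y w))
    rw [hw] at this
    exact (Icc_subset_Icc_right hy.le).trans this
  have i0 : Icc p s ⊆ Icc p w := Icc_subset_Icc_right (by linarith)
  have i1 : Icc y w ⊆ Icc p w := Icc_subset_Icc_left hpy.le
  refine ⟨r, Icc p s, Icc y w, ⟨isCompact_Icc, isCompact_Icc, ⟨p, le_rfl, hs.1⟩, ?_,
    (union_subset i0 i1).trans h0, (union_subset i0 i1).trans h1⟩, i0, i1⟩
  rw [disjoint_left]
  intro t ht ht'
  linarith [ht.2, ht'.1]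

/-- With fixed points `z₂ < z₁ < z₀`, an orbit starting between `z₁` and `z₀`, falling below `z₂`
and then rising above `z₀` yields a horseshoe: the intervals are `[z₁, z₀]` and `[v, z₂]`, where
`v` is the low point of the orbit. -/
lemma isHorseshoe_of_fixed {g : ℝ → ℝ} (hg : Continuous g) {z₀ z₁ z₂ u v : ℝ} {r s : ℕ}
    (hz₀ : g z₀ = z₀) (hz₁ : g z₁ = z₁) (hz₂ : g z₂ = z₂) (h21 : z₂ < z₁)
    (hu : u ∈ Icc z₁ z₀) (huv : g^[s] u = v) (hv : v < z₂) (hr : z₀ < g^[r] v) :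
    ∃ k K₀ K₁, IsHorseshoe g k K₀ K₁ ∧ K₀ ⊆ Icc v z₀ ∧ K₁ ⊆ Icc v z₀ := by
  have hcr : Continuous g^[r] := hg.iterate r
  have hcs : Continuous g^[s] := hg.iterate s
  have hr0 : g^[r] z₀ = z₀ := Function.iterate_fixed hz₀ r
  have hr1 : g^[r] z₁ = z₁ := Function.iterate_fixed hz₁ r
  have hr2 : g^[r] z₂ = z₂ := Function.iterate_fixed hz₂ r
  have hs0 : g^[s] z₀ = z₀ := Function.iterate_fixed hz₀ s
  have h10 : z₁ ≤ z₀ := hu.1.trans hu.2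
  have hBB : Icc z₁ z₀ ⊆ g^[r] '' Icc z₁ z₀ := by
    have := intermediate_value_Icc h10 (hcr.continuousOn (s := Icc z₁ z₀))
    rwa [hr0, hr1] at this
  have hAB : Icc z₁ z₀ ⊆ g^[r] '' Icc v z₂ := by
    have := intermediate_value_Icc' hv.le (hcr.continuousOn (s := Icc v z₂))
    rw [hr2] at this
    exact (Icc_subset_Icc h21.le hr.le).trans this
  have hB : Icc v z₀ ⊆ g^[s] '' Icc z₁ z₀ := by
    have := intermediate_value_Icc hu.2 (hcs.continuousOn (s := Icc u z₀))
    rw [hs0, huv] at this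
    exact this.trans (image_mono (Icc_subset_Icc_left hu.1))
  have i0 : Icc z₁ z₀ ⊆ Icc v z₀ := Icc_subset_Icc_left (by linarith)
  have i1 : Icc v z₂ ⊆ Icc v z₀ := Icc_subset_Icc_right (by linarith)
  refine ⟨s + r, Icc z₁ z₀, Icc v z₂, ⟨isCompact_Icc, isCompact_Icc, ⟨u, hu⟩, ?_, ?_, ?_⟩,
    i0, i1⟩
  · rw [disjoint_left]
    intro t ht ht'
    linarith [ht.1, ht'.2]
  · rw [Function.iterate_add, image_comp]
    exact (union_subset i0 i1).trans (hB.trans (image_mono hBB))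
  · rw [Function.iterate_add, image_comp]
    exact (union_subset i0 i1).trans (hB.trans (image_mono hAB))

/-- If a point `t ≠ p` of the ω-limit set is eventually mapped to `p`, there is a homoclinic
horseshoe. When `t` is the largest point of the ω-limit set, it is first replaced by a preimage
inside the ω-limit set, which is smaller. -/
lemma exists_horseshoe_of_preimage {g : ℝ → ℝ} (hg : Continuous g) {p q x : ℝ} (hp : g p = p)
    (horb : ∀ n, g^[n] x ∈ Ioo p q) (hpω : p ∈ omegaSet g x) {t : ℝ} (ht : t ∈ omegaSet g x)
    (htp : t ≠ p) {j : ℕ} (hj : g^[j] t = p) :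
    ∃ k K₀ K₁, IsHorseshoe g k K₀ K₁ ∧ K₀ ⊆ Ico p q ∧ K₁ ⊆ Ico p q := by
  have hsub : omegaSet g x ⊆ Icc p q :=
    omegaSet_subset_of_forall_ge isClosed_Icc 0 fun n _ => Ioo_subset_Icc_self (horb n)
  have hmain : ∀ w ∈ omegaSet g x, w ≠ p → ∀ j : ℕ, g^[j] w = p →
      ∀ c ∈ omegaSet g x, w < c →
      ∃ k K₀ K₁, IsHorseshoe g k K₀ K₁ ∧ K₀ ⊆ Ico p q ∧ K₁ ⊆ Ico p q := by
    intro w hw hwp j hj c hc hwc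
    have hpw : p < w := lt_of_le_of_ne (hsub hw).1 hwp.symm
    obtain ⟨m, -, hm⟩ := exists_gt_of_mem_omegaSet hpω hpw 0
    obtain ⟨n, hn, hn'⟩ := exists_lt_of_mem_omegaSet hc hwc (m + j)
    obtain ⟨r, rfl⟩ : ∃ r, n = r + m := ⟨n - m, by omega⟩
    obtain ⟨i, rfl⟩ : ∃ i, r = i + j := ⟨r - j, by omega⟩
    obtain ⟨k, K₀, K₁, hK, h0, h1⟩ := isHorseshoe_of_preimage hg (r := i + j) hp (horb m).1 hm
      (by rw [Function.iterate_add_apply, hj, Function.iterate_fixed hp])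
      (by rw [← Function.iterate_add_apply]; exact hn')
    have hwq : Icc p w ⊆ Ico p q := fun s hs =>
      ⟨hs.1, lt_of_le_of_lt hs.2 (lt_of_lt_of_le hwc (hsub hc).2)⟩
    exact ⟨k, K₀, K₁, hK, h0.trans hwq, h1.trans hwq⟩
  by_cases hmax : ∃ c ∈ omegaSet g x, t < c
  · obtain ⟨c, hc, htc⟩ := hmax
    exact hmain t ht htp j hj c hc htc
  · push Not at hmax
    obtain ⟨t', -, ht', hgt⟩ := exists_preimage_omegaSet hg (x := x) (τ := t)
      (isCompact_Icc (a := p) (b := q)) (by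
        intro s hs N
        rw [mem_omegaSet_iff, mapClusterPt_iff_frequently] at ht
        obtain ⟨n, hn, hns⟩ := frequently_atTop.1 (ht s hs) (N + 1)
        refine ⟨n - 1, by omega, Ioo_subset_Icc_self (horb _), ?_⟩
        rwa [Nat.sub_add_cancel (by omega)])
    have hne : t' ≠ t := by
      rintro rfl
      exact htp (by rw [← hj, Function.iterate_fixed hgt])
    have hnp : t' ≠ p := by
      rintro rfl
      exact htp (by rw [← hgt, hp])
    exact hmain t' ht' hnp (j + 1) (by rw [Function.iterate_succ_apply, hgt, hj]) t ht
      (lt_of_le_of_ne (hmax t' ht') hne)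

/-- An orbit staying strictly between `p` and `q` which accumulates at the fixed point `p` and at
some other point forces a horseshoe in `[p, q)`. -/
lemma exists_horseshoe {g : ℝ → ℝ} (hg : Continuous g) {p q x : ℝ} (hp : g p = p)
    (horb : ∀ n, g^[n] x ∈ Ioo p q) (hpω : p ∈ omegaSet g x) {c : ℝ} (hc : c ∈ omegaSet g x)
    (hcp : c ≠ p) :
    ∃ k K₀ K₁, IsHorseshoe g k K₀ K₁ ∧ K₀ ⊆ Ico p q ∧ K₁ ⊆ Ico p q := by
  have hsub : omegaSet g x ⊆ Icc p q :=
    omegaSet_subset_of_forall_ge isClosed_Icc 0 fun n _ => Ioo_subset_Icc_self (horb n)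
  have hpc : p < c := lt_of_le_of_ne (hsub hc).1 hcp.symm
  by_cases hpre : ∃ t ∈ omegaSet g x, t ≠ p ∧ g t = p
  · obtain ⟨t, ht, htp, hgt⟩ := hpre
    exact exists_horseshoe_of_preimage hg hp horb hpω ht htp (j := 1) (by simpa using hgt)
  push Not at hpre
  -- Late in the orbit, a point close to `p` can only come from a point close to `p`.
  have hgrad : ∀ z > p, ∃ η > p, ∃ N, ∀ n ≥ N, g^[n + 1] x < η → g^[n] x < z := by
    intro z hz
    by_contra! hcon
    obtain ⟨t, htC, htω, hgt⟩ := exists_preimage_omegaSet hg (x := x) (τ := p)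
      (isCompact_Icc (a := z) (b := q)) (by
        intro s hs N
        obtain ⟨η, hη, hηs⟩ := exists_Ico_subset_of_mem_nhds hs ⟨p + 1, by linarith⟩
        obtain ⟨n, hn, h1, h2⟩ := hcon η hη N
        exact ⟨n, hn, ⟨h2, (horb n).2.le⟩, hηs ⟨(horb (n + 1)).1.le, h1⟩⟩)
    exact hpre t htω (by linarith [htC.1] : p < t).ne' hgt
  -- Near `p` the orbit has to move up as well as down, so fixed points accumulate at `p`.
  have hfixed : ∀ z > p, ∃ z' ∈ Ioo p z, g z' = z' := by
    intro z hz
    have hup : ∃ s ∈ Ioo p (min z c), s ≤ g s := by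
      by_contra! hcon
      obtain ⟨m, -, hm⟩ := exists_gt_of_mem_omegaSet hpω (lt_min hz hpc) 0
      have hst : ∀ i, g^[m + i] x ≤ g^[m] x := by
        intro i
        induction i with
        | zero => rfl
        | succ i ih =>
          have := hcon (g^[m + i] x) ⟨(horb _).1, lt_of_le_of_lt ih hm⟩
          rw [← Function.iterate_succ_apply' g] at this
          exact this.le.trans ih
      obtain ⟨n, hn, hn'⟩ := exists_lt_of_mem_omegaSet hc (lt_of_lt_of_le hm (min_le_right _ _)) m
      obtain ⟨i, rfl⟩ := Nat.exists_eq_add_of_le hn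
      exact absurd (hst i) (not_le.2 hn')
    have hdown : ∃ s ∈ Ioo p z, g s ≤ s := by
      by_contra! hcon
      obtain ⟨η, hη, N, hN⟩ := hgrad z hz
      -- Backwards in time the orbit would decrease, so it could not get closer to `p` than at
      -- time `N`.
      have hback : ∀ i, g^[N + i] x < η → g^[N] x ≤ g^[N + i] x := by
        intro i
        induction i with
        | zero => intro _; rfl
        | succ i ih =>
          intro hi
          have h1 := hN (N + i) (by omega) hi
          have h2 := hcon (g^[N + i] x) ⟨(horb _).1, h1⟩
          rw [← Function.iterate_succ_apply' g] at h2
          exact (ih (h2.trans hi)).trans h2.le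
      obtain ⟨n, hn, hn'⟩ := exists_gt_of_mem_omegaSet hpω (lt_min hη (horb N).1) N
      obtain ⟨i, rfl⟩ := Nat.exists_eq_add_of_le hn
      have := hback i (hn'.trans_le (min_le_left _ _))
      exact absurd (hn'.trans_le (min_le_right _ _)) (not_lt.2 this)
    obtain ⟨s, hs, hgs⟩ := hup
    obtain ⟨s', hs', hgs'⟩ := hdown
    have hsz : s ∈ Ioo p z := ⟨hs.1, hs.2.trans_le (min_le_left _ _)⟩
    obtain ⟨z', hz', hgz'⟩ := isPreconnected_Ioo.intermediate_value₂ hs' hsz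
      hg.continuousOn continuousOn_id hgs' hgs
    exact ⟨z', hz', hgz'⟩
  obtain ⟨z₀, hz₀, hg₀⟩ := hfixed c hpc
  obtain ⟨η, hη, N, hN⟩ := hgrad z₀ hz₀.1
  obtain ⟨z₁, hz₁, hg₁⟩ := hfixed (min η z₀) (lt_min hη hz₀.1)
  obtain ⟨z₂, hz₂, hg₂⟩ := hfixed z₁ hz₁.1
  have hz₁η : z₁ < η := hz₁.2.trans_le (min_le_left _ _)
  have hz₁z₀ : z₁ < z₀ := hz₁.2.trans_le (min_le_right _ _)
  -- On its way down from above `z₀` to below `z₁` the orbit cannot jump over `[z₁, z₀]`.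
  obtain ⟨m, hmN, hm⟩ : ∃ m ≥ N, g^[m] x ∈ Icc z₁ z₀ := by
    obtain ⟨n, hn, hn'⟩ := exists_lt_of_mem_omegaSet hc hz₀.2 N
    by_contra! hcon
    have hst : ∀ i, z₁ ≤ g^[n + i] x := by
      intro i
      induction i with
      | zero => exact (hz₁z₀.trans hn').le
      | succ i ih =>
        by_contra! hlt
        exact hcon (n + i) (by omega) ⟨ih, (hN (n + i) (by omega) (hlt.trans hz₁η)).le⟩
    obtain ⟨k, hk, hk'⟩ := exists_gt_of_mem_omegaSet hpω hz₁.1 n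
    obtain ⟨i, rfl⟩ := Nat.exists_eq_add_of_le hk
    exact absurd (hst i) (not_le.2 hk')
  obtain ⟨n, hn, hn'⟩ := exists_gt_of_mem_omegaSet hpω hz₂.1 m
  obtain ⟨l, hl, hl'⟩ := exists_lt_of_mem_omegaSet hc hz₀.2 n
  obtain ⟨k, K₀, K₁, hK, h0, h1⟩ := isHorseshoe_of_fixed hg (s := n - m) (r := l - n)
    (v := g^[n] x) hg₀ hg₁ hg₂ hz₂.2 hm
    (by rw [← Function.iterate_add_apply, Nat.sub_add_cancel hn]) hn'
    (by rw [← Function.iterate_add_apply, Nat.sub_add_cancel hl]; exact hl')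
  have hwq : Icc (g^[n] x) z₀ ⊆ Ico p q := fun s hs =>
    ⟨(horb n).1.le.trans hs.1, lt_of_le_of_lt hs.2 (lt_of_lt_of_le hz₀.2 (hsub hc).2)⟩
  exact ⟨k, K₀, K₁, hK, h0.trans hwq, h1.trans hwq⟩

/-- The mirror image of `exists_horseshoe` under `t ↦ -t`. -/
lemma exists_horseshoe' {g : ℝ → ℝ} (hg : Continuous g) {p q x : ℝ} (hq : g q = q)
    (horb : ∀ n, g^[n] x ∈ Ioo p q) (hqω : q ∈ omegaSet g x) {c : ℝ} (hc : c ∈ omegaSet g x)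
    (hcq : c ≠ q) :
    ∃ k K₀ K₁, IsHorseshoe g k K₀ K₁ ∧ K₀ ⊆ Ioc p q ∧ K₁ ⊆ Ioc p q := by
  set g' : ℝ → ℝ := fun t => -g (-t) with hg'
  have hconj : Function.Semiconj (fun t : ℝ => -t) g g' := fun t => by simp [hg']
  have hconj' : Function.Semiconj (fun t : ℝ => -t) g' g := fun t => by simp [hg']
  have hit : ∀ n t, g'^[n] (-t) = -g^[n] t := fun n t => ((hconj.iterate_right n) t).symm
  have hω : ∀ t ∈ omegaSet g x, -t ∈ omegaSet g' (-x) := by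
    intro t ht
    rw [mem_omegaSet_iff] at ht ⊢
    simp only [hit]
    exact ht.continuousAt_comp (f := fun t : ℝ => -t) continuous_neg.continuousAt
  obtain ⟨k, K₀, K₁, ⟨c0, c1, hne, hd, h0, h1⟩, i0, i1⟩ :=
    exists_horseshoe (g := g') (p := -q) (q := -p) (x := -x) (by fun_prop) (by simp [hg', hq])
      (fun n => by
        rw [hit]
        exact ⟨neg_lt_neg (horb n).2, neg_lt_neg (horb n).1⟩)
      (hω q hqω) (hω c hc) (by simpa using hcq)
  have him : ∀ K : Set ℝ, g^[k] '' ((fun t : ℝ => -t) '' K) =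
      (fun t : ℝ => -t) '' (g'^[k] '' K) := by
    intro K
    rw [image_image, image_image]
    exact image_congr fun t _ => ((hconj'.iterate_right k) t).symm
  have hIoc : ∀ K ⊆ Ico (-q) (-p), (fun t : ℝ => -t) '' K ⊆ Ioc p q := by
    rintro K hK _ ⟨t, ht, rfl⟩
    have := hK ht
    exact ⟨by linarith [this.2], by linarith [this.1]⟩
  refine ⟨k, (fun t : ℝ => -t) '' K₀, (fun t : ℝ => -t) '' K₁,
    ⟨c0.image continuous_neg, c1.image continuous_neg, hne.image _,
      (disjoint_image_iff neg_injective).2 hd, ?_, ?_⟩, hIoc _ i0, hIoc _ i1⟩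
  · rw [him, ← image_union]
    exact image_mono h0
  · rw [him, ← image_union]
    exact image_mono h1

/-! ### The trichotomy -/

lemma projS_injOn_Ico {c d : ℝ} (h : d - c ≤ 1) : InjOn projS (Ico c d) := by
  have hsub : Ico c d ⊆ Ico c (c + 1) := Ico_subset_Ico_right (by linarith)
  exact fun s hs t ht hst => (AddCircle.coe_eq_coe_iff_of_mem_Ico (hsub hs) (hsub ht)).1 hst

lemma projS_injOn_Ioc {c d : ℝ} (h : d - c ≤ 1) : InjOn projS (Ioc c d) := by
  have hsub : Ioc c d ⊆ Ioc c (c + 1) := Ioc_subset_Ioc_right (by linarith)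
  exact fun s hs t ht hst => (AddCircle.coe_eq_coe_iff_of_mem_Ioc (hsub hs) (hsub ht)).1 hst

/-- Trichotomy for ω-limit sets of the lifting. -/
theorem omega_limit_trichotomy (f : Circle1 → Circle1) (hf : Continuous f)
    (h0 : topEnt f = 0) (hfix : ∃ z, f z = z)
    (F : ℝ → ℝ) (hF : IsLift f F) (hdeg : ∀ x : ℝ, F (x + 1) = F x + 1)
    (a b : ℝ) (hab1 : 1 ≤ b - a) (hab2 : b - a < 2)
    (hI : F '' Icc a b = Icc a b)
    (h1 : MapsTo F (Icc a (b - 1)) (Icc a (b - 1)))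
    (h2 : MapsTo F (Icc (a + 1) b) (Icc (a + 1) b)) :
    ∀ x ∈ Icc a b,
      omegaSet F x ⊆ Icc a (b - 1) ∨ omegaSet F x ⊆ Ioo (b - 1) (a + 1) ∨
        omegaSet F x ⊆ Icc (a + 1) b := by
  intro x hx
  have hmaps : MapsTo F (Icc a b) (Icc a b) := fun t ht => hI ▸ mem_image_of_mem F ht
  -- An orbit entering one of the two invariant end intervals never leaves it.
  by_cases hJ0 : ∃ n, F^[n] x ∈ Icc a (b - 1)
  · obtain ⟨n, hn⟩ := hJ0
    refine Or.inl (omegaSet_subset_of_forall_ge isClosed_Icc n fun m hm => ?_)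
    obtain ⟨i, rfl⟩ : ∃ i, m = i + n := ⟨m - n, by omega⟩
    rw [Function.iterate_add_apply]
    exact h1.iterate i hn
  by_cases hJ1 : ∃ n, F^[n] x ∈ Icc (a + 1) b
  · obtain ⟨n, hn⟩ := hJ1
    refine Or.inr (Or.inr (omegaSet_subset_of_forall_ge isClosed_Icc n fun m hm => ?_))
    obtain ⟨i, rfl⟩ : ∃ i, m = i + n := ⟨m - n, by omega⟩
    rw [Function.iterate_add_apply]
    exact h2.iterate i hn
  push Not at hJ0 hJ1
  have horb : ∀ n, F^[n] x ∈ Ioo (b - 1) (a + 1) := by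
    intro n
    have hn : F^[n] x ∈ Icc a b := hmaps.iterate n hx
    refine ⟨?_, ?_⟩
    · by_contra! hle
      exact hJ0 n ⟨hn.1, hle⟩
    · by_contra! hle
      exact hJ1 n ⟨hle, hn.2⟩
  have hsub : omegaSet F x ⊆ Icc (b - 1) (a + 1) :=
    omegaSet_subset_of_forall_ge isClosed_Icc 0 fun n _ => Ioo_subset_Icc_self (horb n)
  by_cases hp : b - 1 ∈ omegaSet F x
  · -- `F (b - 1)` lies in the ω-limit set and in `[a, b - 1]`, so `b - 1` is fixed.
    have hfp : F (b - 1) = b - 1 :=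
      le_antisymm (h1 ⟨by linarith, le_rfl⟩).2 (hsub (map_mem_omegaSet hF.1 hp)).1
    left
    intro c hc
    by_contra hcI
    have hcp : c ≠ b - 1 := by
      rintro rfl
      exact hcI ⟨by linarith, le_rfl⟩
    obtain ⟨k, K₀, K₁, hK, i0, i1⟩ := exists_horseshoe hF.1 hfp horb hp hc hcp
    exact (hK.project hF (projS_injOn_Ico (by linarith)) i0 i1).topEnt_ne_zero h0
  by_cases hq : a + 1 ∈ omegaSet F x
  · have hfq : F (a + 1) = a + 1 :=
      le_antisymm (hsub (map_mem_omegaSet hF.1 hq)).2 (h2 ⟨le_rfl, by linarith⟩).1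
    right; right
    intro c hc
    by_contra hcI
    have hcq : c ≠ a + 1 := by
      rintro rfl
      exact hcI ⟨le_rfl, by linarith⟩
    obtain ⟨k, K₀, K₁, hK, i0, i1⟩ := exists_horseshoe' hF.1 hfq horb hq hc hcq
    exact (hK.project hF (projS_injOn_Ioc (by linarith)) i0 i1).topEnt_ne_zero h0
  · right; left
    intro c hc
    exact ⟨lt_of_le_of_ne (hsub hc).1 (by rintro rfl; exact hp hc),
      lt_of_le_of_ne (hsub hc).2 (by rintro rfl; exact hq hc)⟩
end
end

section
/- Let f : 𝕊 → 𝕊 be a circle map with h_top(f) = 0, deg(f) = 1 and a fixed point, and let F be a lifting of f and I = [a,b] ⊂ ℝ a closed interval with 1 ≤ b − a < 2 such that F([a,b]) = [a,b], F([a,b−1]) ⊆ [a,b−1] and F([a+1,b]) ⊆ [a+1,b]. If J is a periodic subinterval of I for F with period n > 1, then exactly one of the following holds: (1) J ⊆ [a,b−1] and ⋃_{j=0}^{n−1} F^j(J) ⊆ [a,b−1]; (2) J ⊆ [a+1,b] and ⋃_{j=0}^{n−1} F^j(J) ⊆ [a+1,b]; (3) J ⊆ (b−1,a+1) and ⋃_{j=0}^{n−1}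 F^j(J) ⊆ (b−1,a+1). -/
/-!
Put `A k = F^k(J)`. The sets `A k` are intervals contained in `[a,b]`, with `A (k + n) = A k`.
Let `S` be one of the two end pieces `[a,b-1]`, `[a+1,b]`, and `c` its endpoint facing the middle
(`b-1`, respectively `a+1`), so that an interval in `[a,b]` which meets `S` without being
contained in `S` must contain `c`.

If some `A k` meets `S`, invariance of `S` and periodicity show that every `A k` meets `S`. As
`n > 1`, `A 0` and `A 1` are disjoint, so at most one of them contains `c`, and hence one of them
is contained in `S`; by invariance and periodicity all of them are. This is
`orbit_subset_of_meets`. If no `A k` meets either end piece, the whole orbit lies in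
`(b-1,a+1)`. The three regions are pairwise disjoint because `b - a < 2`, and `J` is nonempty,
so the alternatives exclude one another.
-/

open Set Filter Topology ENNReal

noncomputable section

/-- If the orbit of a periodic set `J` of period `n > 1` meets a forward invariant set `S`, then
it stays in `S`, provided that there is a single point `c` contained in every iterate of `J` that
meets `S` without being contained in it. -/
theorem orbit_subset_of_meets {X : Type*} {F : X → X} {J S : Set X} {n : ℕ} {c : X}
    (hn : 1 < n) (hper : IsPeriodicSet F J n) (hS : MapsTo F S S)
    (hc : ∀ k, (F^[k] '' J ∩ S).Nonempty → ¬ F^[k] '' J ⊆ S → c ∈ F^[k] '' J)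
    {i : ℕ} (hi : (F^[i] '' J ∩ S).Nonempty) (j : ℕ) : F^[j] '' J ⊆ S := by
  obtain ⟨-, hdis, hJn⟩ := hper
  have hadd : ∀ k m, F^[k + m] '' J = F^[k] '' (F^[m] '' J) := fun k m => by
    rw [Function.iterate_add, image_comp]
  have hmul : ∀ m, F^[m * n] '' J = J := by
    intro m
    induction m with
    | zero => simp
    | succ m ih => rw [Nat.succ_mul, hadd, hJn, ih]
  have hmeet : ∀ k, (F^[k] '' J ∩ S).Nonempty := by
    intro k
    obtain ⟨y, hy, hyS⟩ := hi
    -- `k + i * n` is a time `≥ i` at which the orbit is back at `F^k(J)`.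
    have hle : i ≤ k + i * n := by nlinarith
    obtain ⟨d, hd⟩ := Nat.exists_eq_add_of_le' hle
    refine ⟨F^[d] y, ?_, hS.iterate d hyS⟩
    have h : F^[k] '' J = F^[d] '' (F^[i] '' J) := by
      rw [← hadd, ← hd, hadd, hmul]
    rw [h]
    exact mem_image_of_mem _ hy
  have hJS : J ⊆ S := by
    by_contra hnot
    have hc0 : c ∈ F^[0] '' J := hc 0 (hmeet 0) (by simpa using hnot)
    have hA1 : F^[1] '' J ⊆ S := by
      by_contra hnot1
      exact disjoint_left.mp (hdis 0 1 one_pos hn) hc0 (hc 1 (hmeet 1) hnot1)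
    apply hnot
    have h := hadd (n - 1) 1
    rw [Nat.sub_add_cancel hn.le, hJn] at h
    rw [h]
    exact ((hS.iterate (n - 1)).mono_left hA1).image_subset
  exact ((hS.iterate j).mono_left hJS).image_subset

/-- A periodic subinterval of `I` with period `n > 1` satisfies exactly one
of three alternatives. -/
theorem periodic_interval_trichotomy (f : Circle1 → Circle1) (hf : Continuous f)
    (h0 : topEnt f = 0) (hfix : ∃ z, f z = z)
    (F : ℝ → ℝ) (hF : IsLift f F) (hdeg : ∀ x : ℝ, F (x + 1) = F x + 1)
    (a b : ℝ) (hab1 : 1 ≤ b - a) (hab2 : b - a < 2)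
    (hI : F '' Icc a b = Icc a b)
    (h1 : MapsTo F (Icc a (b - 1)) (Icc a (b - 1)))
    (h2 : MapsTo F (Icc (a + 1) b) (Icc (a + 1) b))
    (J : Set ℝ) (hJint : IsClosedSubInt J) (hJsub : J ⊆ Icc a b)
    (n : ℕ) (hn : 1 < n) (hper : IsPeriodicSet F J n) :
    (J ⊆ Icc a (b - 1) ∧ (⋃ j < n, F^[j] '' J) ⊆ Icc a (b - 1) ∧
      ¬(J ⊆ Icc (a + 1) b ∧ (⋃ j < n, F^[j] '' J) ⊆ Icc (a + 1) b) ∧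
      ¬(J ⊆ Ioo (b - 1) (a + 1) ∧ (⋃ j < n, F^[j] '' J) ⊆ Ioo (b - 1) (a + 1))) ∨
    (J ⊆ Icc (a + 1) b ∧ (⋃ j < n, F^[j] '' J) ⊆ Icc (a + 1) b ∧
      ¬(J ⊆ Icc a (b - 1) ∧ (⋃ j < n, F^[j] '' J) ⊆ Icc a (b - 1)) ∧
      ¬(J ⊆ Ioo (b - 1) (a + 1) ∧ (⋃ j < n, F^[j] '' J) ⊆ Ioo (b - 1) (a + 1))) ∨
    (J ⊆ Ioo (b - 1) (a + 1) ∧ (⋃ j < n, F^[j] '' J) ⊆ Ioo (b - 1) (a + 1) ∧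
      ¬(J ⊆ Icc a (b - 1) ∧ (⋃ j < n, F^[j] '' J) ⊆ Icc a (b - 1)) ∧
      ¬(J ⊆ Icc (a + 1) b ∧ (⋃ j < n, F^[j] '' J) ⊆ Icc (a + 1) b)) := by
  obtain ⟨c, d, hcd, rfl⟩ := hJint
  have hne : (Icc c d).Nonempty := ⟨c, le_rfl, hcd.le⟩
  have hF0 : Continuous F := hF.1
  have hord : ∀ k, (F^[k] '' Icc c d).OrdConnected := fun k =>
    ((isPreconnected_Icc).image _ (hF0.iterate k).continuousOn).ordConnected
  have hFI : MapsTo F (Icc a b) (Icc a b) := fun x hx => hI ▸ mem_image_of_mem F hx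
  have hsubI : ∀ k, F^[k] '' Icc c d ⊆ Icc a b := fun k =>
    ((hFI.iterate k).mono_left hJsub).image_subset
  have hcL : ∀ k, (F^[k] '' Icc c d ∩ Icc a (b - 1)).Nonempty →
      ¬ F^[k] '' Icc c d ⊆ Icc a (b - 1) → b - 1 ∈ F^[k] '' Icc c d := by
    rintro k ⟨x, hx, hxS⟩ hnot
    obtain ⟨y, hy, hyS⟩ := not_subset.mp hnot
    have hyI := hsubI k hy
    have hby : b - 1 < y := by
      by_contra h
      exact hyS ⟨hyI.1, not_lt.mp h⟩
    exact (hord k).out hx hy ⟨hxS.2, hby.le⟩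
  have hcR : ∀ k, (F^[k] '' Icc c d ∩ Icc (a + 1) b).Nonempty →
      ¬ F^[k] '' Icc c d ⊆ Icc (a + 1) b → a + 1 ∈ F^[k] '' Icc c d := by
    rintro k ⟨x, hx, hxS⟩ hnot
    obtain ⟨y, hy, hyS⟩ := not_subset.mp hnot
    have hyI := hsubI k hy
    have hya : y < a + 1 := by
      by_contra h
      exact hyS ⟨not_lt.mp h, hyI.2⟩
    exact (hord k).out hy hx ⟨hya.le, hxS.1⟩
  -- The zeroth iterate is `J` itself, so a bound on all iterates bounds both `J` and the union.
  have hboth : ∀ S : Set ℝ, (∀ k, F^[k] '' Icc c d ⊆ S) →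
      Icc c d ⊆ S ∧ (⋃ j < n, F^[j] '' Icc c d) ⊆ S := fun S h =>
    ⟨by simpa using h 0, iUnion₂_subset fun j _ => h j⟩
  have hexcl : ∀ S T : Set ℝ, Disjoint S T → Icc c d ⊆ S → ¬ Icc c d ⊆ T :=
    fun S T hST h h' => disjoint_left.mp hST (h hne.some_mem) (h' hne.some_mem)
  have hLR : Disjoint (Icc a (b - 1)) (Icc (a + 1) b) :=
    disjoint_left.mpr fun x hx hx' => by linarith [hx.2, hx'.1]
  have hLM : Disjoint (Icc a (b - 1)) (Ioo (b - 1) (a + 1)) :=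
    disjoint_left.mpr fun x hx hx' => by linarith [hx.2, hx'.1]
  have hRM : Disjoint (Icc (a + 1) b) (Ioo (b - 1) (a + 1)) :=
    disjoint_left.mpr fun x hx hx' => by linarith [hx.1, hx'.2]
  by_cases hL : ∃ k, (F^[k] '' Icc c d ∩ Icc a (b - 1)).Nonempty
  · obtain ⟨k, hk⟩ := hL
    obtain ⟨hJ, hU⟩ := hboth _ (orbit_subset_of_meets hn hper h1 hcL hk)
    exact Or.inl ⟨hJ, hU, fun h => hexcl _ _ hLR hJ h.1, fun h => hexcl _ _ hLM hJ h.1⟩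
  by_cases hR : ∃ k, (F^[k] '' Icc c d ∩ Icc (a + 1) b).Nonempty
  · obtain ⟨k, hk⟩ := hR
    obtain ⟨hJ, hU⟩ := hboth _ (orbit_subset_of_meets hn hper h2 hcR hk)
    exact Or.inr (Or.inl
      ⟨hJ, hU, fun h => hexcl _ _ hLR.symm hJ h.1, fun h => hexcl _ _ hRM hJ h.1⟩)
  have hM : ∀ k, F^[k] '' Icc c d ⊆ Ioo (b - 1) (a + 1) := by
    intro k x hx
    have hxI := hsubI k hx
    constructor
    · by_contra h
      exact hL ⟨k, x, hx, hxI.1, not_lt.mp h⟩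
    · by_contra h
      exact hR ⟨k, x, hx, not_lt.mp h, hxI.2⟩
  obtain ⟨hJ, hU⟩ := hboth _ hM
  exact Or.inr (Or.inr
    ⟨hJ, hU, fun h => hexcl _ _ hLM.symm hJ h.1, fun h => hexcl _ _ hRM.symm hJ h.1⟩)

end
end

section
/- Let f : 𝕊 → 𝕊 be a circle map with h_top(f) = 0, deg(f) = 1 and a fixed point, and let F be a lifting of f and I = [a,b] ⊂ ℝ a closed interval with 1 ≤ b − a < 2 such that F([a,b]) = [a,b], F([a,b−1]) ⊆ [a,b−1] and F([a+1,b]) ⊆ [a+1,b]. If K is a periodic subinterval of 𝕊 for f with period n > 1, then there exists a periodic subinterval J of I for F with period n such that e(J) = K. -/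
/-!
The map `F` has a fixed point `p ∈ [a, b - 1]`, because it maps that interval into itself. A fixed
point of `f` cannot lie in a periodic arc of period `n > 1`, so `K` misses `projS p` and has a lift
`J = [c, d]` inside `[p, p + 1] ⊆ [a, b]`. Since `F^n(J)` is connected and projects onto `K`, it
lies in a single translate `J + k` with `k ∈ ℤ` (`image_subset_translate`), and comparing
projections gives `F^n(J) = J + k`. Degree one yields `F^{2n}(J) ⊆ J + 2k`; as `[a, b]` is
invariant and shorter than `2`, this forces `k = 0`. The images `F^i(J)`, `i < n`, are disjoint
because their projections `f^i(K)` are.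
-/

open Set Filter Topology ENNReal

noncomputable section

lemma projS_eq_iff {x y : ℝ} : projS x = projS y ↔ ∃ k : ℤ, y = x + k := by
  unfold projS
  rw [QuotientAddGroup.eq, AddSubgroup.mem_zmultiples_iff]
  constructor
  · rintro ⟨k, hk⟩
    exact ⟨k, by simp at hk; linarith⟩
  · rintro ⟨k, hk⟩
    exact ⟨k, by simp; linarith⟩

lemma projS_iterate {f : Circle1 → Circle1} {F : ℝ → ℝ} (hF : IsLift f F) (i : ℕ) (x : ℝ) :
    projS (F^[i] x) = f^[i] (projS x) :=
  (Function.Semiconj.iterate_right (f := projS) (ga := F) (gb := f) (fun x => hF.2 x) i) x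

lemma projS_image_iterate {f : Circle1 → Circle1} {F : ℝ → ℝ} (hF : IsLift f F) (i : ℕ)
    (J : Set ℝ) : projS '' (F^[i] '' J) = f^[i] '' (projS '' J) := by
  simp only [image_image, projS_iterate hF]

lemma add_int_of_degree_one {G : ℝ → ℝ} (h : ∀ x, G (x + 1) = G x + 1) (k : ℤ) (x : ℝ) :
    G (x + k) = G x + k := by
  induction k using Int.induction_on with
  | zero => simp
  | succ i ih =>
    have := h (x + (i : ℤ))
    push_cast at *
    rw [← add_assoc, this, ih, add_assoc]
  | pred i ih =>
    have := h (x + ((-(i : ℤ) - 1 : ℤ) : ℝ))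
    push_cast at *
    rw [show x + (-(i : ℝ) - 1) + 1 = x + -(i : ℝ) by ring] at this
    linarith

lemma iterate_degree_one {F : ℝ → ℝ} (h : ∀ x, F (x + 1) = F x + 1) (n : ℕ) (x : ℝ) :
    F^[n] (x + 1) = F^[n] x + 1 := by
  have hc : Function.Commute F (fun x : ℝ => x + 1) := h
  exact hc.iterate_left n x

/-- A continuous image of `[c, d]` inside the disjoint union of the integer translates of `[c, d]`
stays in one translate, since the gaps between consecutive translates disconnect the union. -/
lemma image_subset_translate {G : ℝ → ℝ} (hG : Continuous G) {c d : ℝ} (hcd : c < d)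
    (hd : d - c < 1) (h : ∀ x ∈ Icc c d, ∃ k : ℤ, G x - k ∈ Icc c d) :
    ∃ k : ℤ, ∀ x ∈ Icc c d, G x - k ∈ Icc c d := by
  obtain ⟨k, hk⟩ := h c ⟨le_rfl, hcd.le⟩
  refine ⟨k, fun x hx => ?_⟩
  have hconn : OrdConnected (G '' Icc c d) :=
    (isPreconnected_Icc.image G hG.continuousOn).ordConnected
  have hc : G c ∈ G '' Icc c d := mem_image_of_mem G ⟨le_rfl, hcd.le⟩
  have hxm : G x ∈ G '' Icc c d := mem_image_of_mem G hx
  -- No point of the image lies strictly inside a gap `(d + l, c + 1 + l)`.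
  have gap : ∀ (l : ℤ) (y : ℝ), y ∈ G '' Icc c d → d + l < y → y < c + 1 + l → False := by
    rintro l y ⟨z, hz, rfl⟩ hy1 hy2
    obtain ⟨m, hm1, hm2⟩ := h z hz
    have e1 : (l : ℝ) < m := by linarith
    have e2 : (m : ℝ) < l + 1 := by linarith
    norm_cast at e1 e2
    omega
  constructor
  · by_contra! hlt
    obtain ⟨y, hy1, hy2⟩ := exists_between
      (show max (G x) (d + ((k - 1 : ℤ) : ℝ)) < c + k by
        push_cast; exact max_lt (by linarith) (by linarith))
    rw [max_lt_iff] at hy1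
    refine gap (k - 1) y (hconn.out hxm hc ⟨hy1.1.le, ?_⟩) hy1.2 ?_
    · linarith [hk.1]
    · push_cast; linarith
  · by_contra! hlt
    obtain ⟨y, hy1, hy2⟩ := exists_between
      (show d + (k : ℝ) < min (G x) (c + 1 + k) from lt_min (by linarith) (by linarith))
    rw [lt_min_iff] at hy2
    exact gap k y (hconn.out hc hxm ⟨by linarith [hk.2], hy2.1.le⟩) hy1 hy2.2

/-- A periodic subinterval of the circle with period `n > 1` lifts to a
periodic subinterval of `I` with the same period. -/
theorem periodic_arc_lifts (f : Circle1 → Circle1) (hf : Continuous f)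
    (h0 : topEnt f = 0) (hfix : ∃ z, f z = z)
    (F : ℝ → ℝ) (hF : IsLift f F) (hdeg : ∀ x : ℝ, F (x + 1) = F x + 1)
    (a b : ℝ) (hab1 : 1 ≤ b - a) (hab2 : b - a < 2)
    (hI : F '' Icc a b = Icc a b)
    (h1 : MapsTo F (Icc a (b - 1)) (Icc a (b - 1)))
    (h2 : MapsTo F (Icc (a + 1) b) (Icc (a + 1) b))
    (K : Set Circle1) (hK : IsClosedArc K)
    (n : ℕ) (hn : 1 < n) (hper : IsPeriodicSet f K n) :
    ∃ J : Set ℝ, IsClosedSubInt J ∧ J ⊆ Icc a b ∧ IsPeriodicSet F J n ∧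
      projS '' J = K := by
  obtain ⟨p, hp, hFp⟩ : ∃ p ∈ Icc a (b - 1), F p = p := by
    obtain ⟨p, hp, hFp⟩ := exists_mem_Icc_isFixedPt_of_mapsTo hF.1.continuousOn
      (by linarith : a ≤ b - 1) h1
    exact ⟨p, hp, hFp⟩
  obtain ⟨c₀, d₀, hcd₀, hd₀, rfl⟩ := hK
  obtain ⟨-, hdisj, hfn⟩ := hper
  have hfp : f (projS p) = projS p := by rw [← hF.2, hFp]
  have hpK : projS p ∉ projS '' Icc c₀ d₀ := fun hmem =>
    disjoint_left.1 (hdisj 0 1 one_pos hn) (by simpa using hmem) ⟨_, hmem, by simpa using hfp⟩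
  -- Translate the given lift of `K` by an integer so that it starts in `[p, p + 1)`.
  obtain ⟨c, d, hcd, hd, hJK, hpc, hdp⟩ : ∃ c d : ℝ, c < d ∧ d - c < 1 ∧
      projS '' Icc c d = projS '' Icc c₀ d₀ ∧ p ≤ c ∧ d ≤ p + 1 := by
    set m : ℤ := ⌊c₀ - p⌋ with hm
    have hm1 : (m : ℝ) ≤ c₀ - p := Int.floor_le _
    have hm2 : c₀ - p < m + 1 := Int.lt_floor_add_one _
    refine ⟨c₀ - m, d₀ - m, by linarith, by linarith, ?_, by linarith, ?_⟩
    · ext z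
      constructor
      · rintro ⟨x, hx, rfl⟩
        exact ⟨x + m, ⟨by linarith [hx.1], by linarith [hx.2]⟩,
          (projS_eq_iff.2 ⟨m, rfl⟩).symm⟩
      · rintro ⟨x, hx, rfl⟩
        exact ⟨x - m, ⟨by linarith [hx.1], by linarith [hx.2]⟩,
          projS_eq_iff.2 ⟨m, by ring⟩⟩
    · by_contra! hlt
      refine hpK ⟨p + ((m + 1 : ℤ) : ℝ), ?_, (projS_eq_iff.2 ⟨m + 1, rfl⟩).symm⟩
      push_cast
      exact ⟨by linarith, by linarith⟩
  rw [← hJK] at hdisj hfn ⊢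
  have hJI : Icc c d ⊆ Icc a b := Icc_subset_Icc (by linarith [hp.1]) (by linarith [hp.2])
  have hinv : MapsTo F (Icc a b) (Icc a b) := fun x hx => hI ▸ mem_image_of_mem F hx
  obtain ⟨k, hk⟩ : ∃ k : ℤ, ∀ x ∈ Icc c d, F^[n] x - k ∈ Icc c d := by
    refine image_subset_translate (hF.1.iterate n) hcd hd fun x hx => ?_
    have hmem : projS (F^[n] x) ∈ projS '' Icc c d := by
      rw [← hfn, projS_iterate hF]
      exact mem_image_of_mem _ (mem_image_of_mem _ hx)
    obtain ⟨y, hy, hyx⟩ := hmem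
    obtain ⟨k, hk⟩ := projS_eq_iff.1 hyx
    exact ⟨k, by rw [hk]; simpa using hy⟩
  have hk0 : k = 0 := by
    have hc : c ∈ Icc c d := ⟨le_rfl, hcd.le⟩
    have e1 := hk _ hc
    have e2 := hk _ e1
    have e3 := add_int_of_degree_one (iterate_degree_one hdeg n) k (F^[n] c - k)
    rw [sub_add_cancel] at e3
    have e4 := hinv.iterate n (hinv.iterate n (hJI hc))
    have e5 := hJI e2
    -- `F^{2n}(c)` and `F^{2n}(c) - 2k` both lie in `[a, b]`, whose length is less than `2`.
    rw [e3] at e4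
    have u1 : (k : ℝ) < 1 := by linarith [e4.1, e4.2, e5.1, e5.2]
    have u2 : (-1 : ℝ) < k := by linarith [e4.1, e4.2, e5.1, e5.2]
    norm_cast at u1
    have u3 : (-1 : ℤ) < k := by exact_mod_cast u2
    omega
  subst hk0
  simp only [Int.cast_zero, sub_zero] at hk
  refine ⟨Icc c d, ⟨c, d, hcd, rfl⟩, hJI, ⟨by omega, fun i j hij hj => ?_, ?_⟩, rfl⟩
  · refine Disjoint.of_image (f := projS) ?_
    rw [projS_image_iterate hF, projS_image_iterate hF]
    exact hdisj i j hij hj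
  · refine Subset.antisymm (image_subset_iff.2 hk) fun x hx => ?_
    have hmem : projS x ∈ projS '' (F^[n] '' Icc c d) := by
      rw [projS_image_iterate hF, hfn]
      exact mem_image_of_mem _ hx
    obtain ⟨_, ⟨z, hz, rfl⟩, hzx⟩ := hmem
    obtain ⟨l, hl⟩ := projS_eq_iff.1 hzx
    have hz' := hk z hz
    -- Two points of `[c, d]` differing by an integer coincide, because `d - c < 1`.
    have u1 : (l : ℝ) < 1 := by linarith [hx.2, hz'.1]
    have u2 : (-1 : ℝ) < l := by linarith [hx.1, hz'.2]
    norm_cast at u1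
    have u3 : (-1 : ℤ) < l := by exact_mod_cast u2
    obtain rfl : l = 0 := by omega
    exact ⟨z, hz, by simpa using hl.symm⟩

end
end

section
/- Let M be a nondegenerate closed interval or the circle 𝕊 and f : M → M continuous with h_top(f) = 0 and Per(f) ≠ ∅. Let x ∈ M with ω(x,f) infinite, and let (J_n)_{n∈ℕ} be periodic intervals with periods (k_n)_{n∈ℕ} such that k₁ ≥ 1, each k_{n+1} is a multiple of k_n with (k_n) strictly increasing, J_{n+1} ⊆ J_n, and ω(x,f) ⊆ ⋂_{n≥1} ⋃_{i=0}^{k_n−1} f^i(J_n) with ω(x,f) containing no periodic points. If K is a periodic subinterval of M with period m and ω(x,f) ∩ ⋃_{i=0}^{m−1} f^i(K) ≠ ∅, then there exists n ∈ ℕ such that ⋃_{i=0}^{k_n−1} f^i(J_n) ⊆ ⋃_{i=0}^{m−1} f^i(K). -/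
/-!
The argument is a count of endpoints. Let `z` be a point of `K` on the orbit of a point of `ω(x,f)`,
so that `z` lies in the cycle of `J n`, and choose `n` with `k n > 2 * m`. The points `z`,
`f^m z`, `f^{2m} z` all lie in `K`, and they lie in three different, hence pairwise disjoint,
members of the cycle of `J n`. The interval `K` has at most two boundary points, so one of these
three connected sets meets `K` but misses its frontier, and is therefore contained in `K`
(`exists_image_subset`). Pushing this inclusion around the cycle gives the inclusion of orbits
(`iUnion_image_subset`).
-/

open Set Filter Topology ENNReal

noncomputable section

/-- The content of **Statement 8**, for a phase space `X` whose closed nondegenerate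
subintervals are described by the predicate `isInt`. -/
def Stmt8Core {X : Type*} [TopologicalSpace X] (isInt : Set X → Prop) (f : X → X) : Prop :=
  topEnt f = 0 → HasPeriodicPt f →
    ∀ x : X, (omegaSet f x).Infinite →
      ∀ J : ℕ → Set X, ∀ k : ℕ → ℕ,
        1 ≤ k 0 → (∀ n, k n ∣ k (n + 1)) → StrictMono k →
        (∀ n, J (n + 1) ⊆ J n) →
        (∀ n, isInt (J n) ∧ IsPeriodicSet f (J n) (k n)) →
        omegaSet f x ⊆ ⋂ n : ℕ, ⋃ i < k n, f^[i] '' J n →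
        (∀ y ∈ omegaSet f x, ¬∃ q : ℕ, 0 < q ∧ f^[q] y = y) →
        ∀ K : Set X, ∀ m : ℕ, isInt K → IsPeriodicSet f K m →
          (omegaSet f x ∩ ⋃ i < m, f^[i] '' K).Nonempty →
          ∃ n : ℕ, (⋃ i < k n, f^[i] '' J n) ⊆ ⋃ i < m, f^[i] '' K

/-- A periodic set of period `n` is `n`-periodic under taking images: only the exponent modulo `n`
matters. -/
lemma IsPeriodicSet.image_iterate_mod {X : Type*} {f : X → X} {J : Set X} {n : ℕ}
    (h : IsPeriodicSet f J n) (p : ℕ) : f^[p] '' J = f^[p % n] '' J := by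
  have key : ∀ q : ℕ, f^[n * q] '' J = J := by
    intro q
    rw [Function.iterate_mul, Set.image_iterate_eq]
    exact Function.IsFixedPt.iterate h.2.2 q
  conv_lhs => rw [← Nat.mod_add_div p n, Function.iterate_add, image_comp, key]

lemma IsPeriodicSet.disjoint_of_mod_ne {X : Type*} {f : X → X} {J : Set X} {n : ℕ}
    (h : IsPeriodicSet f J n) {p q : ℕ} (hpq : p % n ≠ q % n) :
    Disjoint (f^[p] '' J) (f^[q] '' J) := by
  rw [h.image_iterate_mod p, h.image_iterate_mod q]
  rcases lt_or_gt_of_ne hpq with hlt | hlt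
  · exact h.2.1 _ _ hlt (Nat.mod_lt _ h.1)
  · exact (h.2.1 _ _ hlt (Nat.mod_lt _ h.1)).symm

/-- If one member of the cycle of `J` lies in `K`, then the whole cycle of `J` lies in the cycle
of `K`. -/
lemma iUnion_image_subset {X : Type*} {f : X → X} {J K : Set X} {n m p : ℕ}
    (hJ : IsPeriodicSet f J n) (hK : IsPeriodicSet f K m) (hp : f^[p] '' J ⊆ K) :
    (⋃ i < n, f^[i] '' J) ⊆ ⋃ i < m, f^[i] '' K := by
  refine iUnion₂_subset fun i _ => ?_
  -- Adding the multiple `n * p` of the period to `i` makes the exponent at least `p`.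
  have hle : p ≤ i + n * p := le_add_left (Nat.le_mul_of_pos_left p hJ.1)
  have hi : f^[i] '' J = f^[i + n * p - p] '' (f^[p] '' J) := by
    rw [← image_comp, ← Function.iterate_add, Nat.sub_add_cancel hle,
      hJ.image_iterate_mod i, hJ.image_iterate_mod (i + n * p), Nat.add_mul_mod_self_left]
  rw [hi]
  refine (image_mono hp).trans ?_
  rw [hK.image_iterate_mod]
  exact subset_biUnion_of_mem (u := fun i => f^[i] '' K) (Nat.mod_lt _ hK.1)

lemma subset_of_disjoint_frontier {X : Type*} [TopologicalSpace X] {C K : Set X}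
    (hC : IsPreconnected C) (hne : (C ∩ K).Nonempty) (hd : Disjoint C (frontier K)) : C ⊆ K := by
  refine (hC.subset_left_of_subset_union isOpen_interior isClosed_closure.isOpen_compl
    (disjoint_compl_right.mono_left (interior_subset.trans subset_closure)) ?_ ?_).trans
    interior_subset
  · intro y hy
    by_cases h : y ∈ interior K
    · exact Or.inl h
    · exact Or.inr fun hcl => disjoint_left.1 hd hy ⟨hcl, h⟩
  · obtain ⟨y, hyC, hyK⟩ := hne
    exact ⟨y, hyC, by_contra fun h => disjoint_left.1 hd hyC ⟨subset_closure hyK, h⟩⟩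

/-- If a point `z` of `K` lies in the cycle of `J`, whose period exceeds `2 * m`, and `K` has at most
two boundary points, then some member of the cycle of `J` is contained in `K`. -/
lemma exists_image_subset {X : Type*} [TopologicalSpace X] {f : X → X} (hf : Continuous f)
    {J K : Set X} {n m a : ℕ} (hJc : IsPreconnected J) {u v : X} (hfr : frontier K ⊆ {u, v})
    (hJ : IsPeriodicSet f J n) (hK : IsPeriodicSet f K m) (hnm : 2 * m < n)
    {z : X} (hzK : z ∈ K) (hzJ : z ∈ f^[a] '' J) : ∃ p, f^[p] '' J ⊆ K := by
  by_contra! hno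
  have hm := hK.1
  have hmeet : ∀ i : ℕ, ∃ w ∈ f^[m * i + a] '' J, w ∈ frontier K := by
    intro i
    refine not_disjoint_iff.1 fun hd => hno _ (subset_of_disjoint_frontier
      (hJc.image _ (hf.iterate _).continuousOn) ⟨f^[m * i] z, ?_, ?_⟩ hd)
    · rw [Function.iterate_add, image_comp]
      exact mem_image_of_mem _ hzJ
    · have h := mem_image_of_mem f^[m * i] hzK
      rwa [hK.image_iterate_mod, Nat.mul_mod_right, Function.iterate_zero, image_id] at h
  have hmod : ∀ i j : ℕ, i < j → j ≤ 2 → (m * i + a) % n ≠ (m * j + a) % n := by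
    intro i j hij hj h
    have hle : m * i < m * j := Nat.mul_lt_mul_of_pos_left hij hm
    have hj2 : m * j ≤ m * 2 := Nat.mul_le_mul_left m hj
    have h' : m * i ≡ m * j [MOD n] := Nat.ModEq.add_right_cancel' a h
    rw [Nat.ModEq, Nat.mod_eq_of_lt (by omega), Nat.mod_eq_of_lt (by omega)] at h'
    omega
  choose w hwJ hwK using hmeet
  have hne : ∀ i j : ℕ, i < j → j ≤ 2 → w i ≠ w j := fun i j hij hj =>
    (hJ.disjoint_of_mod_ne (hmod i j hij hj)).ne_of_mem (hwJ i) (hwJ j)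
  have h01 := hne 0 1 (by norm_num) (by norm_num)
  have h02 := hne 0 2 (by norm_num) (by norm_num)
  have h12 := hne 1 2 (by norm_num) (by norm_num)
  have h0 := hfr (hwK 0)
  have h1 := hfr (hwK 1)
  have h2 := hfr (hwK 2)
  simp only [mem_insert_iff, mem_singleton_iff] at h0 h1 h2
  grind

/-- The theorem holds in any space whose intervals are connected and have at most two boundary
points. -/
lemma stmt8Core_of_frontier {X : Type*} [TopologicalSpace X] {isInt : Set X → Prop}
    (hconn : ∀ J, isInt J → IsPreconnected J)
    (hfr : ∀ K, isInt K → ∃ u v, frontier K ⊆ {u, v})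
    {f : X → X} (hf : Continuous f) : Stmt8Core isInt f := by
  intro _ _ x _ J k _ _ hk _ hJ hω _ K m hKint hK ⟨y, hyω, hyK⟩
  obtain ⟨u, v, huv⟩ := hfr K hKint
  have hn : 2 * m < k (2 * m + 1) := (Nat.lt_succ_self _).trans_le hk.le_apply
  refine ⟨2 * m + 1, ?_⟩
  have hyJ := mem_iInter.1 (hω hyω) (2 * m + 1)
  simp only [mem_iUnion] at hyK hyJ
  obtain ⟨j, hj, hyK⟩ := hyK
  obtain ⟨a, _, hyJ⟩ := hyJ
  -- The point `f^[m - j] y` of the orbit of `y` has returned to `K` itself.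
  have hzK : f^[m - j] y ∈ K := by
    have h := mem_image_of_mem f^[m - j] hyK
    rwa [← image_comp, ← Function.iterate_add, Nat.sub_add_cancel hj.le, hK.2.2] at h
  have hzJ : f^[m - j] y ∈ f^[m - j + a] '' J (2 * m + 1) := by
    rw [Function.iterate_add, image_comp]
    exact mem_image_of_mem _ hyJ
  obtain ⟨p, hp⟩ := exists_image_subset hf (hconn _ (hJ _).1) huv (hJ _).2 hK hn hzK hzJ
  exact iUnion_image_subset (hJ _).2 hK hp

lemma IsClosedArc.isPreconnected {J : Set Circle1} (hJ : IsClosedArc J) : IsPreconnected J := by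
  obtain ⟨c, d, _, _, rfl⟩ := hJ
  exact isPreconnected_Icc.image _ (AddCircle.continuous_mk' 1).continuousOn

lemma IsClosedArc.frontier_subset {K : Set Circle1} (hK : IsClosedArc K) :
    ∃ u v, frontier K ⊆ {u, v} := by
  obtain ⟨c, d, _, _, rfl⟩ := hK
  refine ⟨projS c, projS d, ?_⟩
  have hcl : IsClosed (projS '' Icc c d) :=
    (isCompact_Icc.image (AddCircle.continuous_mk' 1)).isClosed
  have hop : IsOpen (projS '' Ioo c d) := QuotientAddGroup.isOpenMap_coe _ isOpen_Ioo
  rw [hcl.frontier_eq]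
  rintro _ ⟨⟨t, ht, rfl⟩, hti⟩
  have ht' : t ∉ Ioo c d := fun h =>
    hti (interior_maximal (image_mono Ioo_subset_Icc_self) hop (mem_image_of_mem _ h))
  rcases eq_endpoints_or_mem_Ioo_of_mem_Icc ht with rfl | rfl | h
  · exact Or.inl rfl
  · exact Or.inr rfl
  · exact absurd h ht'

lemma IsClosedSubInt.isPreconnected {a b : ℝ} {J : Set ↥(Icc a b)} (hJ : IsClosedSubInt J) :
    IsPreconnected J := by
  obtain ⟨c, d, _, rfl⟩ := hJ
  rw [← Topology.IsInducing.subtypeVal.isPreconnected_image]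
  have : Subtype.val '' Icc c d = Icc (c : ℝ) d := by
    ext t
    constructor
    · rintro ⟨s, hs, rfl⟩
      exact hs
    · intro ht
      exact ⟨⟨t, c.2.1.trans ht.1, ht.2.trans d.2.2⟩, ht, rfl⟩
  rw [this]
  exact isPreconnected_Icc

lemma IsClosedSubInt.frontier_subset {a b : ℝ} {K : Set ↥(Icc a b)} (hK : IsClosedSubInt K) :
    ∃ u v, frontier K ⊆ {u, v} := by
  obtain ⟨c, d, _, rfl⟩ := hK
  refine ⟨c, d, ?_⟩
  rw [isClosed_Icc.frontier_eq]
  rintro t ⟨ht, hti⟩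
  rcases eq_endpoints_or_mem_Ioo_of_mem_Icc ht with rfl | rfl | h
  · exact Or.inl rfl
  · exact Or.inr rfl
  · exact absurd (interior_maximal Ioo_subset_Icc_self isOpen_Ioo h) hti

/-- for `M` a nondegenerate closed interval or the circle. -/
theorem periodic_splitting_intersect :
    (∀ f : Circle1 → Circle1, Continuous f → Stmt8Core IsClosedArc f) ∧
    (∀ a b : ℝ, a < b → ∀ f : ↥(Icc a b) → ↥(Icc a b), Continuous f →
      Stmt8Core IsClosedSubInt f) := by
  exact ⟨fun f hf => stmt8Core_of_frontier (fun _ => IsClosedArc.isPreconnected)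
      (fun _ => IsClosedArc.frontier_subset) hf,
    fun a b _ f hf => stmt8Core_of_frontier (fun _ => IsClosedSubInt.isPreconnected)
      (fun _ => IsClosedSubInt.frontier_subset) hf⟩
end
end

section
/- Let (X,f) be a topological dynamical system and k ∈ ℕ with k ≥ 1. Then p*_{X,𝒰} computed with respect to f is of polynomial order for every open cover 𝒰 of X if and only if p*_{X,𝒰} computed with respect to f^k is of polynomial order for every open cover 𝒰 of X. -/
/-!
Both implications are comparisons of pattern complexities at the same `n`. A time tuple `q` for
`f^k` is the time tuple `k q` for `f`, so `p*_{𝒰}(n)` for `f^k` is at most `p*_{𝒰}(n)` for `f`.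
Conversely, put `𝒲 = ⋁_{j<k} f^{-j} 𝒰`, again an open cover. Writing `t i = k (q i) + r i` with
`r i < k`, the join of `𝒲` along `q` under `f^k` refines the join of `𝒰` along `t` under `f`, so
`p*_{𝒰}(n)` for `f` is at most `p*_{𝒲}(n)` for `f^k`.

Since `coverN` is an infimum and `patternComp` a supremum in `ℕ`, with junk value `0` on an empty
set resp. an unbounded one, these comparisons need finite subcovers and a bound uniform in the time
tuple. Both come from `exists_subcover_timeJoin`: a subcover of `𝒰` with `m` elements yields one of
any join of length `n` with at most `m ^ n` elements.
-/

open Set Filter Topology ENNReal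

noncomputable section

/-- `V` is a finite subcover of `U`. -/
def IsFinSubcover {X : Type*} (U : Set (Set X)) (V : Finset (Set X)) : Prop :=
  ↑V ⊆ U ∧ ⋃₀ (V : Set (Set X)) = univ

theorem IsOpenCover.exists_finSubcover {X : Type*} [TopologicalSpace X] [CompactSpace X]
    {U : Set (Set X)} (hU : IsOpenCover U) : ∃ V, IsFinSubcover U V := by
  obtain ⟨b, hb, hfin, hc⟩ := isCompact_univ.elim_finite_subcover_image (b := U) (c := id)
    hU.1 (by rw [← hU.2, sUnion_eq_biUnion]; rfl)
  refine ⟨hfin.toFinset, by simpa using hb, ?_⟩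
  rw [hfin.coe_toFinset, sUnion_eq_biUnion]
  exact univ_subset_iff.1 hc

theorem coverN_le_card {X : Type*} {U : Set (Set X)} {V : Finset (Set X)}
    (h : IsFinSubcover U V) : coverN U ≤ V.card :=
  Nat.sInf_le ⟨V, h.1, h.2, rfl⟩

theorem exists_subcover_card_eq_coverN {X : Type*} {U : Set (Set X)}
    (h : ∃ V, IsFinSubcover U V) : ∃ V, IsFinSubcover U V ∧ V.card = coverN U := by
  obtain ⟨V, hV⟩ := h
  obtain ⟨W, h1, h2, h3⟩ := Nat.sInf_mem
    (s := {n | ∃ V : Finset (Set X), ↑V ⊆ U ∧ ⋃₀ (V : Set (Set X)) = univ ∧ V.card = n})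
    ⟨_, V, hV.1, hV.2, rfl⟩
  exact ⟨W, ⟨h1, h2⟩, h3⟩

theorem coverN_le_of_refines {X : Type*} {U W : Set (Set X)}
    (h : ∃ V, IsFinSubcover W V) (href : ∀ A ∈ W, ∃ B ∈ U, A ⊆ B) : coverN U ≤ coverN W := by
  classical
  obtain ⟨V, hV, hc⟩ := exists_subcover_card_eq_coverN h
  choose! g hgU hg using href
  rw [← hc]
  refine (coverN_le_card (V := V.image g) ⟨?_, ?_⟩).trans Finset.card_image_le
  · intro B hB
    obtain ⟨A, hA, rfl⟩ := Finset.mem_image.1 (Finset.mem_coe.1 hB)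
    exact hgU A (hV.1 hA)
  · refine eq_univ_of_forall fun x => ?_
    obtain ⟨A, hA, hx⟩ : x ∈ ⋃₀ (V : Set (Set X)) := hV.2 ▸ mem_univ x
    exact ⟨g A, Finset.mem_coe.2 (Finset.mem_image_of_mem g hA), hg A (hV.1 hA) hx⟩

theorem exists_subcover_timeJoin {X : Type*} (f : X → X) {U : Set (Set X)} {V : Finset (Set X)}
    (hV : IsFinSubcover U V) {n : ℕ} (t : Fin n → ℕ) :
    ∃ V', IsFinSubcover (timeJoin f U t) V' ∧ V'.card ≤ V.card ^ n := by
  classical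
  refine ⟨(Fintype.piFinset fun _ : Fin n => V).image fun u => ⋂ i, f^[t i] ⁻¹' u i,
    ⟨?_, ?_⟩, ?_⟩
  · intro B hB
    obtain ⟨u, hu, rfl⟩ := Finset.mem_image.1 (Finset.mem_coe.1 hB)
    exact ⟨u, fun i => hV.1 (Fintype.mem_piFinset.1 hu i), rfl⟩
  · refine eq_univ_of_forall fun x => ?_
    have hx : ∀ i, ∃ A ∈ V, f^[t i] x ∈ A := fun i => by
      have : f^[t i] x ∈ ⋃₀ (V : Set (Set X)) := hV.2 ▸ mem_univ _
      exact this
    choose u hu hux using hx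
    exact ⟨_, Finset.mem_coe.2 (Finset.mem_image_of_mem _ (Fintype.mem_piFinset.2 hu)),
      mem_iInter.2 hux⟩
  · exact Finset.card_image_le.trans (by simp)

theorem coverN_le_patternComp {X : Type*} (f : X → X) {U : Set (Set X)}
    (hU : ∃ V, IsFinSubcover U V) {n : ℕ} (t : Fin n → ℕ) :
    coverN (timeJoin f U t) ≤ patternComp f U n := by
  obtain ⟨V, hV⟩ := hU
  refine le_csSup ⟨V.card ^ n, ?_⟩ ⟨t, rfl⟩
  rintro _ ⟨s, rfl⟩
  obtain ⟨V', h, hc⟩ := exists_subcover_timeJoin f hV s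
  exact (coverN_le_card h).trans hc

theorem patternComp_le {X : Type*} {f : X → X} {U : Set (Set X)} {n b : ℕ}
    (h : ∀ t : Fin n → ℕ, coverN (timeJoin f U t) ≤ b) : patternComp f U n ≤ b := by
  refine csSup_le ⟨_, fun _ => 0, rfl⟩ ?_
  rintro _ ⟨t, rfl⟩
  exact h t

theorem PolyOrder.mono {p q : ℕ → ℕ} (hq : PolyOrder q) (h : ∀ n, p n ≤ q n) : PolyOrder p := by
  obtain ⟨C, hC, hb⟩ := hq
  exact ⟨C, hC, fun n hn => (Nat.cast_le.2 (h n)).trans (hb n hn)⟩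

theorem IsOpenCover.timeJoin {X : Type*} [TopologicalSpace X] {f : X → X} (hf : Continuous f)
    {U : Set (Set X)} (hU : IsOpenCover U) {n : ℕ} (t : Fin n → ℕ) :
    IsOpenCover (timeJoin f U t) := by
  refine ⟨?_, eq_univ_of_forall fun x => ?_⟩
  · rintro _ ⟨u, hu, rfl⟩
    exact isOpen_iInter_of_finite fun i => (hU.1 _ (hu i)).preimage (hf.iterate _)
  · have hx : ∀ i, ∃ A ∈ U, f^[t i] x ∈ A := fun i => by
      have : f^[t i] x ∈ ⋃₀ U := hU.2 ▸ mem_univ _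
      exact this
    choose u hu hux using hx
    exact ⟨_, ⟨u, hu, rfl⟩, mem_iInter.2 hux⟩

theorem timeJoin_iterate {X : Type*} (f : X → X) (k : ℕ) (U : Set (Set X)) {n : ℕ}
    (t : Fin n → ℕ) : timeJoin (f^[k]) U t = timeJoin f U (fun i => k * t i) := by
  simp only [timeJoin, Function.iterate_mul]

/-- The join of `⋁_{j<k} f^{-j} 𝒰` along the quotients `t i / k` under `f^k` refines the join of
`𝒰` along `t` under `f`. -/
theorem timeJoin_div_refines {X : Type*} (f : X → X) {k : ℕ} (hk : 1 ≤ k) (U : Set (Set X))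
    {n : ℕ} (t : Fin n → ℕ) :
    ∀ A ∈ timeJoin (f^[k]) (timeJoin f U fun j : Fin k => (j : ℕ)) (fun i => t i / k),
      ∃ B ∈ timeJoin f U t, A ⊆ B := by
  rintro _ ⟨w, hw, rfl⟩
  choose u hu hwu using hw
  let r : Fin n → Fin k := fun i => ⟨t i % k, Nat.mod_lt _ hk⟩
  refine ⟨_, ⟨fun i => u i (r i), fun i => hu i (r i), rfl⟩, iInter_mono fun i x hx => ?_⟩
  rw [mem_preimage, hwu i] at hx
  have h := mem_iInter.1 hx (r i)
  rw [mem_preimage, ← Function.iterate_mul, ← Function.iterate_add_apply] at h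
  have e : (r i : ℕ) + k * (t i / k) = t i := Nat.mod_add_div _ _
  rwa [e] at h

/-- Polynomial order of the maximal pattern complexity for all open covers
is preserved by passing to `f^k` (and back). -/
theorem polyOrder_patternComp_iterate {X : Type*} [MetricSpace X] [CompactSpace X]
    (f : X → X) (hf : Continuous f) (k : ℕ) (hk : 1 ≤ k) :
    (∀ U : Set (Set X), IsOpenCover U → PolyOrder (patternComp f U)) ↔
    (∀ U : Set (Set X), IsOpenCover U → PolyOrder (patternComp (f^[k]) U)) := by
  constructor
  · intro h U hU
    refine (h U hU).mono fun n => patternComp_le fun t => ?_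
    rw [timeJoin_iterate]
    exact coverN_le_patternComp f hU.exists_finSubcover _
  · intro h U hU
    have hW := hU.timeJoin hf fun j : Fin k => (j : ℕ)
    refine (h _ hW).mono fun n => patternComp_le fun t => ?_
    obtain ⟨V, hV⟩ := hW.exists_finSubcover
    obtain ⟨V', hV', -⟩ := exists_subcover_timeJoin (f^[k]) hV fun i => t i / k
    exact (coverN_le_of_refines ⟨V', hV'⟩ (timeJoin_div_refines f hk U t)).trans
      (coverN_le_patternComp _ ⟨V, hV⟩ _)
end
end
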